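/- Let Y be an infinite-dimensional Banach space. If every infinite-dimensional separable closed subspace X of Y that is an ideal in Y has the local diameter 2 property, then Y has the local diameter 2 property. -/

import Mathlib

universe u v

open Metric Set

section Defs

variable {Y : Type*} [NormedAddCommGroup Y] [NormedSpace ℝ Y]

/-- `X` is an ideal in `Y`. -/
def IsIdeal (X : Subspace ℝ Y) : Prop :=
  ∀ ε : ℝ, 0 < ε → ∀ E : Subspace ℝ Y, FiniteDimensional ℝ E →
    ∃ T : E →ₗ[ℝ] X,
      (∀ e : E, (e : Y) ∈ X → ((T e : X) : Y) = (e : Y)) ∧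
      (∀ e : E, ‖T e‖ ≤ (1 + ε) * ‖e‖)

/-- `X` is a super-ideal in `Y`. -/
def IsSuperIdeal (X : Subspace ℝ Y) : Prop :=
  ∀ ε : ℝ, 0 < ε → ∀ E : Subspace ℝ Y, FiniteDimensional ℝ E →
    ∃ T : E →ₗ[ℝ] X,
      (∀ e : E, (e : Y) ∈ X → ((T e : X) : Y) = (e : Y)) ∧
      (∀ e : E, (1 + ε)⁻¹ * ‖e‖ ≤ ‖T e‖ ∧ ‖T e‖ ≤ (1 + ε) * ‖e‖)

/-- `X` is a super u-ideal in `Y`. -/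
def IsSuperUIdeal (X : Subspace ℝ Y) : Prop :=
  ∀ ε : ℝ, 0 < ε → ∀ E : Subspace ℝ Y, FiniteDimensional ℝ E →
    ∃ T : E →ₗ[ℝ] X,
      (∀ e : E, (e : Y) ∈ X → ((T e : X) : Y) = (e : Y)) ∧
      (∀ e : E, (1 + ε)⁻¹ * ‖e‖ ≤ ‖T e‖ ∧ ‖T e‖ ≤ (1 + ε) * ‖e‖) ∧
      (∀ e : E, ‖(e : Y) - (2 : ℝ) • ((T e : X) : Y)‖ ≤ (1 + ε) * ‖e‖)

/-- `φ : X* → Y*` is a Hahn-Banach extension operator. -/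
def IsHahnBanachExtensionOperator (X : Subspace ℝ Y)
    (φ : (X →L[ℝ] ℝ) →L[ℝ] (Y →L[ℝ] ℝ)) : Prop :=
  ∀ f : X →L[ℝ] ℝ, (∀ x : X, φ f (x : Y) = f x) ∧ ‖φ f‖ = ‖f‖

/-- A set of functionals `V ⊆ Y*` is 1-norming for `Y`. -/
def IsOneNorming (V : Set (Y →L[ℝ] ℝ)) : Prop :=
  ∀ y : Y, ‖y‖ = sSup {r : ℝ | ∃ v ∈ V, ‖v‖ ≤ 1 ∧ r = |v y|}

end Defs

section Props

variable (Z : Type*) [NormedAddCommGroup Z] [NormedSpace ℝ Z]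

/-- A slice of the closed unit ball of `Z`. -/
def IsSlice (S : Set Z) : Prop :=
  ∃ (f : Z →L[ℝ] ℝ) (ε : ℝ), ‖f‖ = 1 ∧ 0 < ε ∧
    S = {z | z ∈ closedBall (0 : Z) 1 ∧ 1 - ε < f z}

/-- The local diameter 2 property. -/
def HasLocalDiameterTwoProperty : Prop :=
  ∀ S : Set Z, IsSlice Z S → Metric.diam S = 2

/-- The diameter 2 property. -/
def HasDiameterTwoProperty : Prop :=
  ∀ U : Set Z, U.Nonempty →
    (∃ V : Set Z, @IsOpen (WeakSpace ℝ Z) _ V ∧ U = V ∩ closedBall (0 : Z) 1) →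
    Metric.diam U = 2

/-- The strong diameter 2 property. -/
def HasStrongDiameterTwoProperty : Prop :=
  ∀ (n : ℕ), 0 < n → ∀ (S : Fin n → Set Z) (lam : Fin n → ℝ),
    (∀ i, IsSlice Z (S i)) → (∀ i, 0 ≤ lam i) → (∑ i, lam i) = 1 →
    Metric.diam {z : Z | ∃ x : Fin n → Z, (∀ i, x i ∈ S i) ∧ z = ∑ i, lam i • x i} = 2

/-- The Daugavet property. -/
def HasDaugavetProperty : Prop :=
  ∀ T : Z →L[ℝ] Z, Module.finrank ℝ (LinearMap.range (T : Z →ₗ[ℝ] Z)) = 1 →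
    ‖ContinuousLinearMap.id ℝ Z + T‖ = 1 + ‖T‖

end Props

/-- `X` is a Gurariĭ space. -/
def IsGurarii (X : Type*) [NormedAddCommGroup X] [NormedSpace ℝ X] : Prop :=
  ∀ ε : ℝ, 0 < ε →
    ∀ (F : Type) [NormedAddCommGroup F] [NormedSpace ℝ F] [FiniteDimensional ℝ F],
      ∀ (E : Subspace ℝ F) (TE : E →ₗᵢ[ℝ] X),
        ∃ TF : F →ₗ[ℝ] X,
          (∀ e : E, TF (e : F) = TE e) ∧
          (∀ f : F, (1 + ε)⁻¹ * ‖f‖ ≤ ‖TF f‖ ∧ ‖TF f‖ ≤ (1 + ε) * ‖f‖)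

/-- `X` is a Lindenstrauss space: its dual is isometric to some `L¹(μ)`. -/
def IsLindenstrauss (X : Type u) [NormedAddCommGroup X] [NormedSpace ℝ X] : Prop :=
  ∃ (α : Type u) (m : MeasurableSpace α) (μ : @MeasureTheory.Measure α m),
    Nonempty ((X →L[ℝ] ℝ) ≃ₗᵢ[ℝ] MeasureTheory.Lp ℝ 1 μ)

/-!
Every separable subset of `Y` lies in a separable closed ideal (Sims–Yost). Indeed, `C(K, ℝ)` is
separable for `K` compact metrizable, so countably many tuples of vectors approximate, uniformly
over bounded coefficients, the norms of all linear combinations of arbitrary tuples of `Y`; closing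
off under these tuples `ω` times and taking the topological closure gives the ideal. Given a
norm-one functional `f` on `Y`, choose such an ideal `X` that is infinite-dimensional and contains
vectors almost norming `f`. Then `f` restricts to a norm-one functional on `X`, so each slice of
`B_Y` defined by `f` contains a slice of `B_X`.
-/

theorem norm_sum_smul_le_add_of_norm_sub_le {𝕜 V ι : Type*} [NormedField 𝕜]
    [SeminormedAddCommGroup V] [NormedSpace 𝕜 V] [Fintype ι] {x y : ι → V} {η : ℝ}
    (h : ∀ i, ‖x i - y i‖ ≤ η) (c : ι → 𝕜) :
    ‖∑ i, c i • x i‖ ≤ ‖∑ i, c i • y i‖ + η * ∑ i, ‖c i‖ := by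
  have hsub : ‖∑ i, c i • x i - ∑ i, c i • y i‖ ≤ η * ∑ i, ‖c i‖ := by
    simp only [← Finset.sum_sub_distrib, ← smul_sub, Finset.mul_sum]
    refine norm_sum_le_of_le _ fun i _ => ?_
    rw [norm_smul, mul_comm]
    gcongr
    exact h i
  linarith [norm_sub_norm_le (∑ i, c i • x i) (∑ i, c i • y i)]

theorem exists_sum_norm_repr_le_mul_norm {𝕜 E ι : Type*} [NontriviallyNormedField 𝕜]
    [CompleteSpace 𝕜] [NormedAddCommGroup E] [NormedSpace 𝕜 E] [Fintype ι]
    (b : Module.Basis ι 𝕜 E) : ∃ M > 0, ∀ e, ∑ i, ‖b.repr e i‖ ≤ M * ‖e‖ := by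
  have : FiniteDimensional 𝕜 E := .of_basis b
  let φ (i : ι) : E →L[𝕜] 𝕜 := LinearMap.toContinuousLinearMap (b.coord i)
  refine ⟨∑ i, ‖φ i‖ + 1, by positivity, fun e => ?_⟩
  calc ∑ i, ‖b.repr e i‖ ≤ ∑ i, ‖φ i‖ * ‖e‖ := Finset.sum_le_sum fun i _ => (φ i).le_opNorm e
    _ ≤ (∑ i, ‖φ i‖ + 1) * ‖e‖ := by rw [← Finset.sum_mul]; gcongr; linarith

theorem exists_basis_span_range_inter_eq {K V : Type*} [Field K] [AddCommGroup V]
    [Module K V] [FiniteDimensional K V] (P : Submodule K V) :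
    ∃ b : Module.Basis (Fin (Module.finrank K V)) K V, Submodule.span K (range b ∩ P) = P := by
  let bP := Module.finBasis K P
  let b := bP.sumQuot (Module.finBasis K (V ⧸ P))
  refine ⟨b.reindex (b.indexEquiv (Module.finBasis K V)), ?_⟩
  rw [Module.Basis.range_reindex]
  refine le_antisymm (Submodule.span_le.2 inter_subset_right) ?_
  calc P = (Submodule.span K (range bP)).map P.subtype := by simp
    _ ≤ Submodule.span K (range b ∩ P) := by
      rw [Submodule.map_span, ← range_comp]
      refine Submodule.span_mono ?_
      rintro _ ⟨i, rfl⟩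
      exact ⟨⟨Sum.inl i, Module.Basis.sumQuot_inl _ _ i⟩, (bP i).2⟩

theorem exists_countable_forall_exists_dist_lt {α β : Type*} [PseudoMetricSpace β]
    [SecondCountableTopology β] (f : α → β) :
    ∃ C : Set α, C.Countable ∧ ∀ a, ∀ ε > 0, ∃ c ∈ C, dist (f a) (f c) < ε := by
  let := PseudoMetricSpace.induced f inferInstance
  have : SecondCountableTopology α := TopologicalSpace.secondCountableTopology_induced α β f
  obtain ⟨C, hC, hdense⟩ := TopologicalSpace.exists_countable_dense α
  exact ⟨C, hC, fun a ε hε => hdense.exists_dist_lt a hε⟩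

section Ideals

variable {Y : Type*} [NormedAddCommGroup Y] [NormedSpace ℝ Y]

/-- The norms of the linear combinations of a tuple, as a continuous function of the coefficients.
The coefficients range over a closed ball so that the target `C(K, ℝ)` is a separable metric
space. -/
def normProfile {ι : Type*} [Fintype ι] (y : ι → Y) : C(closedBall (0 : ι → ℝ) 1, ℝ) where
  toFun c := ‖∑ i, c.1 i • y i‖
  continuous_toFun := (continuous_finsetSum _ fun i _ =>
    ((continuous_apply i).comp continuous_subtype_val).smul continuous_const).norm

theorem norm_sum_smul_le_of_dist_normProfile_le {ι : Type*} [Fintype ι] {y z : ι → Y} {ε : ℝ}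
    (h : dist (normProfile y) (normProfile z) ≤ ε) (c : ι → ℝ) :
    ‖∑ i, c i • z i‖ ≤ ‖∑ i, c i • y i‖ + ε * ∑ i, ‖c i‖ := by
  set t := ∑ i, ‖c i‖ with ht
  rcases (by positivity : 0 ≤ t).eq_or_lt with h0 | hpos
  · have hc : ∀ i, c i = 0 := by
      simpa [Finset.sum_eq_zero_iff_of_nonneg] using ht.symm.trans h0.symm
    simp [hc, ← h0]
  have hmem : t⁻¹ • c ∈ closedBall (0 : ι → ℝ) 1 := by
    rw [mem_closedBall_zero_iff, pi_norm_le_iff_of_nonneg zero_le_one]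
    intro i
    rw [Pi.smul_apply, norm_smul, norm_inv, Real.norm_of_nonneg hpos.le, inv_mul_le_one₀ hpos]
    exact Finset.single_le_sum (f := fun i => ‖c i‖) (fun _ _ => norm_nonneg _) (Finset.mem_univ i)
  have hscale (x : ι → Y) : normProfile x ⟨t⁻¹ • c, hmem⟩ = t⁻¹ * ‖∑ i, c i • x i‖ := by
    simp [normProfile, mul_smul, ← Finset.smul_sum, norm_smul, abs_of_pos hpos]
  have hdist := (ContinuousMap.dist_apply_le_dist ⟨t⁻¹ • c, hmem⟩).trans h
  rw [hscale, hscale, Real.dist_eq, ← mul_sub, abs_mul, abs_of_pos (inv_pos.2 hpos),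
    inv_mul_le_iff₀ hpos] at hdist
  linarith [neg_abs_le (‖∑ i, c i • y i‖ - ‖∑ i, c i • z i‖)]

/-- Every finite tuple of `Y` has a copy in `B` that almost fixes its entries in `A` and almost does
not increase the norms of its linear combinations. This is a discrete form of the ideal property,
with `A = B = X` for a subspace `X`; it is local enough to be built up along a chain. The error is
measured against the `ℓ¹` norm of the coefficients, so that moving each entry by `η` costs exactly
`η`. -/
def HasApproxCopies (A B : Set Y) : Prop :=
  ∀ (n : ℕ) (y : Fin n → Y) (ε : ℝ), 0 < ε → ∃ z : Fin n → Y,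
    (∀ i, z i ∈ B) ∧ (∀ i, y i ∈ A → ‖z i - y i‖ ≤ ε) ∧
      ∀ c : Fin n → ℝ, ‖∑ i, c i • z i‖ ≤ ‖∑ i, c i • y i‖ + ε * ∑ i, ‖c i‖

namespace HasApproxCopies

variable {A B C : Set Y}

theorem mono_right (h : HasApproxCopies A B) (hBC : B ⊆ C) : HasApproxCopies A C :=
  fun n y ε hε => (h n y ε hε).imp fun _ hz => ⟨fun i => hBC (hz.1 i), hz.2⟩

theorem closure_left (h : HasApproxCopies A B) : HasApproxCopies (closure A) B := by
  intro n y ε hε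
  have hclose : ∀ i, ∃ x, ‖x - y i‖ ≤ ε / 2 ∧ (y i ∈ closure A → x ∈ A) := fun i => by
    by_cases hi : y i ∈ closure A
    · obtain ⟨x, hxA, hx⟩ := Metric.mem_closure_iff.1 hi (ε / 2) (half_pos hε)
      exact ⟨x, by rw [← dist_eq_norm']; exact hx.le, fun _ => hxA⟩
    · exact ⟨y i, by simpa using (half_pos hε).le, fun hi' => absurd hi' hi⟩
  choose x hxy hxA using hclose
  obtain ⟨z, hzB, hzx, hz⟩ := h n x (ε / 2) (half_pos hε)
  refine ⟨z, hzB, fun i hi => ?_, fun c => ?_⟩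
  · linarith [norm_sub_le_norm_sub_add_norm_sub (z i) (x i) (y i), hzx i (hxA i hi), hxy i]
  · linarith [hz c, norm_sum_smul_le_add_of_norm_sub_le hxy c]

theorem iUnion {F : ℕ → Set Y} (hF : Monotone F) (h : ∀ k, HasApproxCopies (F k) (F (k + 1))) :
    HasApproxCopies (⋃ k, F k) (⋃ k, F k) := by
  intro n y ε hε
  obtain ⟨N, hN⟩ : ∃ N, ∀ i, y i ∈ ⋃ k, F k → y i ∈ F N := by
    refine (Filter.eventually_all.2 fun i => ?_).exists (f := Filter.atTop)
    by_cases hi : y i ∈ ⋃ k, F k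
    · obtain ⟨k, hk⟩ := mem_iUnion.1 hi
      exact (Filter.eventually_ge_atTop k).mono fun N hkN _ => hF hkN hk
    · exact .of_forall fun _ hi' => absurd hi' hi
  obtain ⟨z, hzF, hzy, hz⟩ := h N n y ε hε
  exact ⟨z, fun i => mem_iUnion_of_mem _ (hzF i), fun i hi => hzy i (hN i hi), hz⟩

theorem exists_eq_of_mem (h : HasApproxCopies A B) (hAB : A ⊆ B) {n : ℕ} (y : Fin n → Y)
    {ε : ℝ} (hε : 0 < ε) : ∃ z : Fin n → Y, (∀ i, z i ∈ B) ∧ (∀ i, y i ∈ A → z i = y i) ∧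
      ∀ c : Fin n → ℝ, ‖∑ i, c i • z i‖ ≤ ‖∑ i, c i • y i‖ + ε * ∑ i, ‖c i‖ := by
  classical
  obtain ⟨x, hxB, hxy, hx⟩ := h n y (ε / 2) (half_pos hε)
  let z : Fin n → Y := fun i => if y i ∈ A then y i else x i
  have hzx : ∀ i, ‖z i - x i‖ ≤ ε / 2 := fun i => by
    by_cases hi : y i ∈ A
    · simpa [z, hi, norm_sub_rev] using hxy i hi
    · simpa [z, hi] using (half_pos hε).le
  refine ⟨z, fun i => ?_, fun i hi => if_pos hi, fun c => ?_⟩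
  · by_cases hi : y i ∈ A
    · simpa [z, hi] using hAB hi
    · simpa [z, hi] using hxB i
  · linarith [hx c, norm_sum_smul_le_add_of_norm_sub_le hzx c]

theorem isIdeal {X : Subspace ℝ Y} (h : HasApproxCopies (X : Set Y) X) : IsIdeal X := by
  intro ε hε E _
  obtain ⟨b, hb⟩ := exists_basis_span_range_inter_eq (X.comap E.subtype)
  obtain ⟨M, hM, hbM⟩ := exists_sum_norm_repr_le_mul_norm b
  obtain ⟨z, hzX, hzb, hz⟩ := h.exists_eq_of_mem subset_rfl (fun i => (b i : Y)) (div_pos hε hM)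
  let T : E →ₗ[ℝ] X := b.constr ℝ fun i => ⟨z i, hzX i⟩
  refine ⟨T, fun e he => ?_, fun e => ?_⟩
  · have hT : EqOn (X.subtype ∘ₗ T) E.subtype (range b ∩ X.comap E.subtype) := by
      rintro _ ⟨⟨i, rfl⟩, hi⟩
      simpa [T] using hzb i hi
    exact LinearMap.eqOn_span hT (hb.symm ▸ he : e ∈ Submodule.span ℝ (range b ∩ _))
  · have hTe : ‖T e‖ = ‖∑ i, b.repr e i • z i‖ := by
      simp [T, Module.Basis.constr_apply_fintype]
    have he : ‖e‖ = ‖∑ i, b.repr e i • (b i : Y)‖ := by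
      conv_lhs => rw [← b.sum_repr e, ← Submodule.norm_coe]
      simp only [Submodule.coe_sum, Submodule.coe_smul]
    calc ‖T e‖ ≤ ‖e‖ + ε / M * ∑ i, ‖b.repr e i‖ := by rw [hTe, he]; exact hz _
      _ ≤ ‖e‖ + ε / M * (M * ‖e‖) := by gcongr; exact hbM e
      _ = (1 + ε) * ‖e‖ := by field_simp

end HasApproxCopies

theorem exists_countable_approx_tuples {ι : Type*} [Fintype ι] {A : Set Y}
    (hA : TopologicalSpace.IsSeparable A) :
    ∃ C : Set (ι → Y), C.Countable ∧ ∀ (y : ι → Y) (ε : ℝ), 0 < ε → ∃ z ∈ C,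
      (∀ i, y i ∈ A → ‖z i - y i‖ ≤ ε) ∧
      ∀ c : ι → ℝ, ‖∑ i, c i • z i‖ ≤ ‖∑ i, c i • y i‖ + ε * ∑ i, ‖c i‖ := by
  classical
  have := hA.secondCountableTopology
  let f (s : Set ι) (y : {y : ι → Y // ∀ i : s, y i ∈ A}) :
      (s → A) × C(closedBall (0 : ι → ℝ) 1, ℝ) :=
    (fun i => ⟨y.1 i, y.2 i⟩, normProfile y.1)
  choose C hC hdense using fun s => exists_countable_forall_exists_dist_lt (f s)
  refine ⟨⋃ s, Subtype.val '' C s, countable_iUnion fun s => (hC s).image _, fun y ε hε => ?_⟩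
  let s : Set ι := {i | y i ∈ A}
  obtain ⟨z, hz, hdist⟩ := hdense s ⟨y, fun i => i.2⟩ ε hε
  obtain ⟨hentries, hprofile⟩ := max_lt_iff.1 hdist
  refine ⟨z, mem_iUnion_of_mem s (mem_image_of_mem _ hz), fun i hi => ?_,
    norm_sum_smul_le_of_dist_normProfile_le hprofile.le⟩
  rw [← dist_eq_norm']
  exact (dist_le_pi_dist _ _ (⟨i, hi⟩ : s)).trans hentries.le

theorem exists_countable_hasApproxCopies {A : Set Y} (hA : TopologicalSpace.IsSeparable A) :
    ∃ D : Set Y, D.Countable ∧ HasApproxCopies A D := by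
  choose C hC hcopies using fun n : ℕ => exists_countable_approx_tuples (ι := Fin n) hA
  refine ⟨⋃ n, ⋃ z ∈ C n, range z,
    countable_iUnion fun n => (hC n).biUnion fun z _ => countable_range z, fun n y ε hε => ?_⟩
  obtain ⟨z, hz, hzy⟩ := hcopies n y ε hε
  exact ⟨z, fun i => mem_iUnion_of_mem n (mem_biUnion hz (mem_range_self i)), hzy⟩

theorem exists_isSeparable_hasApproxCopies {A : Subspace ℝ Y}
    (hA : TopologicalSpace.IsSeparable (A : Set Y)) :
    ∃ B : Subspace ℝ Y, TopologicalSpace.IsSeparable (B : Set Y) ∧ A ≤ B ∧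
      HasApproxCopies (A : Set Y) B := by
  obtain ⟨D, hD, hAD⟩ := exists_countable_hasApproxCopies hA
  exact ⟨Submodule.span ℝ (A ∪ D), (hA.union hD.isSeparable).span,
    fun a ha => Submodule.subset_span (.inl ha),
    hAD.mono_right (subset_union_right.trans Submodule.subset_span)⟩

theorem exists_isIdeal_of_isSeparable {S : Set Y} (hS : TopologicalSpace.IsSeparable S) :
    ∃ X : Subspace ℝ Y, S ⊆ X ∧ IsClosed (X : Set Y) ∧
      TopologicalSpace.IsSeparable (X : Set Y) ∧ IsIdeal X := by
  let Sep := {A : Subspace ℝ Y // TopologicalSpace.IsSeparable (A : Set Y)}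
  have hstep (A : Sep) : ∃ B : Sep, A.1 ≤ B.1 ∧ HasApproxCopies (A.1 : Set Y) B.1 :=
    let ⟨B, hB, hAB⟩ := exists_isSeparable_hasApproxCopies A.2
    ⟨⟨B, hB⟩, hAB⟩
  choose next hle hcopies using hstep
  let F (k : ℕ) : Sep := next^[k] ⟨Submodule.span ℝ S, hS.span⟩
  have hF_succ (k : ℕ) : F (k + 1) = next (F k) := Function.iterate_succ_apply' _ _ _
  have hmono : Monotone fun k => (F k).1 :=
    monotone_nat_of_le_succ fun k => hF_succ k ▸ hle (F k)
  let U : Subspace ℝ Y := ⨆ k, (F k).1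
  have hU : (U : Set Y) = ⋃ k, ((F k).1 : Set Y) :=
    Submodule.coe_iSup_of_directed _ hmono.directed_le
  have hU_copies : HasApproxCopies (U : Set Y) U := by
    rw [hU]
    exact .iUnion (fun _ _ hkl => hmono hkl) fun k => hF_succ k ▸ hcopies (F k)
  refine ⟨U.topologicalClosure, ?_, U.isClosed_topologicalClosure, ?_, ?_⟩
  · exact (Submodule.subset_span.trans (le_iSup (fun k => (F k).1) 0)).trans
      U.le_topologicalClosure
  · rw [Submodule.topologicalClosure_coe, hU]
    exact (TopologicalSpace.IsSeparable.iUnion fun k => (F k).2).closure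
  · exact (hU_copies.closure_left.mono_right subset_closure).isIdeal

end Ideals

theorem exists_countable_forall_not_finiteDimensional {K V : Type*} [DivisionRing K]
    [AddCommGroup V] [Module K V] (hV : ¬ FiniteDimensional K V) :
    ∃ S : Set V, S.Countable ∧ ∀ X : Submodule K V, S ⊆ X → ¬ FiniteDimensional K X := by
  rw [FiniteDimensional, ← Module.rank_lt_aleph0_iff, not_lt,
    le_rank_iff_exists_linearIndependent] at hV
  obtain ⟨S, hcard, hS⟩ := hV
  refine ⟨S, Cardinal.mk_le_aleph0_iff.1 hcard.le, fun X hSX hX => ?_⟩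
  have hSX_indep : LinearIndependent K (inclusion hSX) := .of_comp X.subtype hS
  have := hSX_indep.finite
  exact (Cardinal.lt_aleph0_of_finite S).ne hcard

theorem exists_countable_forall_norm_comp_subtypeL_eq {𝕜 E F : Type*} [DenselyNormedField 𝕜]
    [NormedAddCommGroup E] [NormedSpace 𝕜 E] [SeminormedAddCommGroup F] [NormedSpace 𝕜 F]
    (f : E →L[𝕜] F) :
    ∃ S : Set E, S.Countable ∧ ∀ X : Submodule 𝕜 E, S ⊆ X → ‖f.comp X.subtypeL‖ = ‖f‖ := by
  choose x hx hfx using fun q : {q : ℚ // (q : ℝ) < ‖f‖} => f.exists_lt_apply_of_lt_opNorm q.2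
  refine ⟨range x, countable_range x, fun X hX => le_antisymm ?_ ?_⟩
  · exact (f.opNorm_comp_le _).trans (mul_le_of_le_one_right (norm_nonneg f) X.norm_subtypeL_le)
  · refine le_of_forall_rat_lt_imp_le fun q hq => (hfx ⟨q, hq⟩).le.trans ?_
    exact (f.comp X.subtypeL).unit_le_opNorm ⟨x ⟨q, hq⟩, hX (mem_range_self _)⟩ (hx _).le

section Slices

variable {Y : Type*} [NormedAddCommGroup Y] [NormedSpace ℝ Y]

theorem IsSlice.subset_closedBall {S : Set Y} (hS : IsSlice Y S) : S ⊆ closedBall 0 1 := by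
  obtain ⟨f, ε, -, -, rfl⟩ := hS
  exact fun _ hz => hz.1

theorem IsSlice.diam_le_two {S : Set Y} (hS : IsSlice Y S) : diam S ≤ 2 :=
  (diam_mono hS.subset_closedBall isBounded_closedBall).trans
    (by simpa using diam_closedBall (x := (0 : Y)) zero_le_one)

theorem HasLocalDiameterTwoProperty.diam_slice_eq_two {X : Subspace ℝ Y}
    (hX : HasLocalDiameterTwoProperty X) {f : Y →L[ℝ] ℝ} (hf : ‖f‖ = 1)
    (hfX : ‖f.comp X.subtypeL‖ = 1) {ε : ℝ} (hε : 0 < ε) :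
    diam {z | z ∈ closedBall (0 : Y) 1 ∧ 1 - ε < f z} = 2 := by
  have hslice : IsSlice Y {z | z ∈ closedBall (0 : Y) 1 ∧ 1 - ε < f z} := ⟨f, ε, hf, hε, rfl⟩
  refine hslice.diam_le_two.antisymm ?_
  rw [← hX _ ⟨f.comp X.subtypeL, ε, hfX, hε, rfl⟩, ← X.subtypeₗᵢ.isometry.diam_image]
  refine diam_mono ?_ (isBounded_closedBall.subset hslice.subset_closedBall)
  rintro _ ⟨z, ⟨hz, hfz⟩, rfl⟩
  exact ⟨by simpa using hz, hfz⟩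

end Slices

theorem localDiameterTwo_of_separable_ideals_general
    (Y : Type*) [NormedAddCommGroup Y] [NormedSpace ℝ Y] (hY : ¬ FiniteDimensional ℝ Y)
    (h : ∀ X : Subspace ℝ Y, IsClosed (X : Set Y) → ¬ FiniteDimensional ℝ X →
      TopologicalSpace.SeparableSpace X → IsIdeal X → HasLocalDiameterTwoProperty X) :
    HasLocalDiameterTwoProperty Y := by
  rintro _ ⟨f, ε, hf, hε, rfl⟩
  obtain ⟨S, hS, hS_infinite⟩ := exists_countable_forall_not_finiteDimensional hY
  obtain ⟨W, hW, hW_norm⟩ := exists_countable_forall_norm_comp_subtypeL_eq f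
  obtain ⟨X, hSWX, hclosed, hsep, hideal⟩ :=
    exists_isIdeal_of_isSeparable (hS.union hW).isSeparable
  obtain ⟨hSX, hWX⟩ := union_subset_iff.1 hSWX
  exact (h X hclosed (hS_infinite X hSX) hsep.separableSpace hideal).diam_slice_eq_two hf
    ((hW_norm X hWX).trans hf) hε

theorem localDiameterTwo_of_separable_ideals
    (Y : Type*) [NormedAddCommGroup Y] [NormedSpace ℝ Y] [CompleteSpace Y]
    (hY : ¬ FiniteDimensional ℝ Y)
    (h : ∀ X : Subspace ℝ Y, IsClosed (X : Set Y) → ¬ FiniteDimensional ℝ X →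
      TopologicalSpace.SeparableSpace X → IsIdeal X → HasLocalDiameterTwoProperty X) :
    HasLocalDiameterTwoProperty Y := by
  exact localDiameterTwo_of_separable_ideals_general Y hY h
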